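/- Combining the Kerman–Sawyer lemma with the Morrey bound: for 0 < α < n, 1 < p ≤ n/α, and nonnegative w ∈ 𝓛^{α,p}, one has the two-weight estimate ‖I_α f‖_{L²(w)} ≤ C ‖w‖_{𝓛^{α,p}} ‖f‖_{L²(w^{-1})} for all measurable f, with C = C(n,α,p). -/

import Mathlib

open MeasureTheory ENNReal Metric Set Filter
open scoped FourierTransform
noncomputable section

abbrev Euc (n : ℕ) := EuclideanSpace ℝ (Fin n)

/-- The axis-parallel cube with corner `a` and side length `s`. -/
def cube {n : ℕ} (a : Fin n → ℝ) (s : ℝ) : Set (Euc n) :=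
  {x | ∀ i, a i ≤ x i ∧ x i ≤ a i + s}

/-- The Morrey norm `‖V‖_{𝓛^{α,p}} = sup_Q |Q|^{α/n} ((1/|Q|)∫_Q V^p)^{1/p}`. -/
def morrey (n : ℕ) (α p : ℝ) (V : Euc n → ℝ) : ℝ≥0∞ :=
  ⨆ (a : Fin n → ℝ) (s : ℝ) (_ : 0 < s),
    volume (cube a s) ^ (α / n) *
      ((volume (cube a s))⁻¹ * ∫⁻ y in cube a s, ENNReal.ofReal (V y ^ p)) ^ (1 / p)

/-- Unnormalized Riesz potential `I_γ f (x) = ∫ |x-y|^{γ-n} f(y) dy` (`ℝ≥0∞`-valued). -/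
def rieszE {n : ℕ} (γ : ℝ) (f : Euc n → ℝ≥0∞) (x : Euc n) : ℝ≥0∞ :=
  ∫⁻ y, ENNReal.ofReal ‖x - y‖ ^ (γ - n) * f y

/-!
The estimate follows from the Schur test for the kernel `|x - y| ^ (α - n)` on `L²(w)`, with test
function `U ^ (1 / p')`, where `U = I_{αp/2} (w ^ p)`. Write `T = I_{α(p+1)/2} (w ^ p)`.
Hölder's inequality gives
`I_α (w U ^ (1 / p')) ≤ T ^ (1 / p) (I_{α/2} U) ^ (1 / p')`,
and the composition law `I_{α/2} ∘ I_{αp/2} = c I_{α(p+1)/2}` turns the right-hand side into a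
multiple of `T`. The Morrey condition says that the measure `w ^ p dx` of a ball of radius `r` is at
most a multiple of `‖w‖ ^ p r ^ (n - αp)`, so Hedberg's inequality bounds `T` by a multiple of
`‖w‖ U ^ (1 / p')`. Only the growth of the two measures on balls enters.
-/

open scoped NNReal Topology

section Schur

variable {Y : Type*} [MeasurableSpace Y]

lemma sq_lintegral_mul_le_lintegral_mul_lintegral {ν : Measure Y} {k h φ : Y → ℝ≥0∞}
    (hk : Measurable k) (hh : Measurable h) (hφ : Measurable φ) (hφ₀ : ∀ᵐ y ∂ν, φ y ≠ 0)
    (hφ_top : ∀ᵐ y ∂ν, φ y ≠ ⊤) :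
    (∫⁻ y, k y * h y ∂ν) ^ 2 ≤
      (∫⁻ y, k y * φ y ∂ν) * ∫⁻ y, k y * (h y ^ 2 * (φ y)⁻¹) ∂ν := by
  have h_sqrt (a : ℝ≥0∞) : (a ^ 2) ^ (1 / 2 : ℝ) = a := by
    rw [← rpow_two, ← rpow_mul, mul_one_div_cancel two_ne_zero, rpow_one]
  have h_sq (a : ℝ≥0∞) : (a ^ (1 / 2 : ℝ)) ^ 2 = a := by
    rw [← rpow_two, ← rpow_mul, one_div_mul_cancel two_ne_zero, rpow_one]
  have h_factor : ∀ᵐ y ∂ν, k y * h y =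
      (k y * φ y) ^ (1 / 2 : ℝ) * (k y * (h y ^ 2 * (φ y)⁻¹)) ^ (1 / 2 : ℝ) := by
    filter_upwards [hφ₀, hφ_top] with y hy₀ hy_top
    rw [← mul_rpow_of_nonneg _ _ (by norm_num), ← h_sqrt (k y * h y)]
    congr 1
    calc (k y * h y) ^ 2 = k y ^ 2 * h y ^ 2 * (φ y * (φ y)⁻¹) := by
          rw [ENNReal.mul_inv_cancel hy₀ hy_top, mul_one, mul_pow]
      _ = k y * φ y * (k y * (h y ^ 2 * (φ y)⁻¹)) := by ring
  calc (∫⁻ y, k y * h y ∂ν) ^ 2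
      ≤ ((∫⁻ y, k y * φ y ∂ν) ^ (1 / 2 : ℝ) *
          (∫⁻ y, k y * (h y ^ 2 * (φ y)⁻¹) ∂ν) ^ (1 / 2 : ℝ)) ^ 2 := by
        rw [lintegral_congr_ae h_factor]
        gcongr
        exact lintegral_mul_norm_pow_le (by fun_prop) (by fun_prop) (by norm_num) (by norm_num)
          (by norm_num)
    _ = (∫⁻ y, k y * φ y ∂ν) * ∫⁻ y, k y * (h y ^ 2 * (φ y)⁻¹) ∂ν := by
        rw [mul_pow, h_sq, h_sq]

lemma lintegral_sq_lintegral_mul_le_of_schur {ν : Measure Y} [SFinite ν] {K : Y → Y → ℝ≥0∞}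
    (hK : Measurable (Function.uncurry K)) (hK_comm : ∀ x y, K x y = K y x) {φ : Y → ℝ≥0∞}
    (hφ : Measurable φ) (hφ₀ : ∀ᵐ y ∂ν, φ y ≠ 0) (hφ_top : ∀ᵐ y ∂ν, φ y ≠ ⊤) {D : ℝ≥0∞}
    (hD : ∀ᵐ x ∂ν, ∫⁻ y, K x y * φ y ∂ν ≤ D * φ x) {h : Y → ℝ≥0∞} (hh : Measurable h) :
    ∫⁻ x, (∫⁻ y, K x y * h y ∂ν) ^ 2 ∂ν ≤ D ^ 2 * ∫⁻ x, h x ^ 2 ∂ν := by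
  calc ∫⁻ x, (∫⁻ y, K x y * h y ∂ν) ^ 2 ∂ν
      ≤ ∫⁻ x, D * φ x * ∫⁻ y, K x y * (h y ^ 2 * (φ y)⁻¹) ∂ν ∂ν := by
        refine lintegral_mono_ae ?_
        filter_upwards [hD] with x hx
        refine (sq_lintegral_mul_le_lintegral_mul_lintegral (by fun_prop) hh hφ hφ₀ hφ_top).trans ?_
        gcongr
    _ = ∫⁻ x, ∫⁻ y, D * φ x * (K x y * (h y ^ 2 * (φ y)⁻¹)) ∂ν ∂ν := by
        refine lintegral_congr fun x ↦ ?_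
        rw [lintegral_const_mul _ (by fun_prop)]
    _ = ∫⁻ y, ∫⁻ x, D * φ x * (K x y * (h y ^ 2 * (φ y)⁻¹)) ∂ν ∂ν :=
        lintegral_lintegral_swap (by fun_prop)
    _ = ∫⁻ y, D * (h y ^ 2 * (φ y)⁻¹) * ∫⁻ x, K y x * φ x ∂ν ∂ν := by
        refine lintegral_congr fun y ↦ ?_
        rw [← lintegral_const_mul _ (by fun_prop)]
        refine lintegral_congr fun x ↦ ?_
        rw [hK_comm x y]
        ring
    _ ≤ ∫⁻ y, D ^ 2 * h y ^ 2 ∂ν := by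
        refine lintegral_mono_ae ?_
        filter_upwards [hD, hφ₀, hφ_top] with y hy hy₀ hy_top
        calc D * (h y ^ 2 * (φ y)⁻¹) * ∫⁻ x, K y x * φ x ∂ν
            ≤ D * (h y ^ 2 * (φ y)⁻¹) * (D * φ y) := by gcongr
          _ = D ^ 2 * h y ^ 2 * ((φ y)⁻¹ * φ y) := by ring
          _ = D ^ 2 * h y ^ 2 := by rw [ENNReal.inv_mul_cancel hy₀ hy_top, mul_one]
    _ = D ^ 2 * ∫⁻ x, h x ^ 2 ∂ν := lintegral_const_mul _ (by fun_prop)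

lemma lintegral_sq_lintegral_mul_weight_le_of_schur {σ : Measure Y} [SFinite σ]
    {K : Y → Y → ℝ≥0∞} (hK : Measurable (Function.uncurry K)) (hK_comm : ∀ x y, K x y = K y x)
    {v φ : Y → ℝ≥0∞} (hv : Measurable v) (hv_top : ∀ᵐ y ∂σ, v y ≠ ⊤) (hφ : Measurable φ)
    (hφ₀ : ∀ᵐ y ∂σ, φ y ≠ 0) (hφ_top : ∀ᵐ y ∂σ, φ y ≠ ⊤) {D : ℝ≥0∞} (hD₀ : D ≠ 0)
    (hD : ∀ x, ∫⁻ y, K x y * (v y * φ y) ∂σ ≤ D * φ x) {F : Y → ℝ≥0∞} (hF : Measurable F) :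
    ∫⁻ x, (∫⁻ y, K x y * F y ∂σ) ^ 2 * v x ∂σ ≤ D ^ 2 * ∫⁻ x, F x ^ 2 * (v x)⁻¹ ∂σ := by
  rcases eq_or_ne (∫⁻ x, F x ^ 2 * (v x)⁻¹ ∂σ) ⊤ with h_top | h_fin
  · simp [h_top, hD₀]
  have h_ac := withDensity_absolutelyContinuous σ v
  have h_withDensity {g : Y → ℝ≥0∞} (hg : Measurable g) :
      ∫⁻ y, g y ∂(σ.withDensity v) = ∫⁻ y, v y * g y ∂σ :=
    lintegral_withDensity_eq_lintegral_mul _ hv hg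
  have hF_eq_zero : ∀ᵐ y ∂σ, v y = 0 → F y = 0 := by
    filter_upwards [ae_lt_top (by fun_prop) h_fin] with y hy hy₀
    contrapose! hy
    simp [hy₀, hy]
  have h_inner (x : Y) : ∫⁻ y, K x y * F y ∂σ =
      ∫⁻ y, K x y * (F y * (v y)⁻¹) ∂(σ.withDensity v) := by
    rw [h_withDensity (by fun_prop)]
    refine lintegral_congr_ae ?_
    filter_upwards [hF_eq_zero, hv_top] with y hy hy_top
    rcases eq_or_ne (v y) 0 with hy₀ | hy₀
    · simp [hy₀, hy hy₀]
    · rw [mul_left_comm, mul_left_comm (v y), ENNReal.mul_inv_cancel hy₀ hy_top, mul_one]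
  calc ∫⁻ x, (∫⁻ y, K x y * F y ∂σ) ^ 2 * v x ∂σ
      = ∫⁻ x, (∫⁻ y, K x y * (F y * (v y)⁻¹) ∂(σ.withDensity v)) ^ 2 ∂(σ.withDensity v) := by
        simp only [h_inner]
        rw [h_withDensity (by fun_prop)]
        simp only [mul_comm]
    _ ≤ D ^ 2 * ∫⁻ x, (F x * (v x)⁻¹) ^ 2 ∂(σ.withDensity v) := by
        refine lintegral_sq_lintegral_mul_le_of_schur hK hK_comm hφ (h_ac hφ₀) (h_ac hφ_top)
          (ae_of_all _ fun x ↦ ?_) (by fun_prop)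
        rw [h_withDensity (by fun_prop)]
        simpa only [mul_left_comm] using hD x
    _ ≤ D ^ 2 * ∫⁻ x, F x ^ 2 * (v x)⁻¹ ∂σ := by
        rw [h_withDensity (by fun_prop)]
        refine mul_le_mul_right (lintegral_mono fun x ↦ ?_) _
        calc v x * (F x * (v x)⁻¹) ^ 2 = F x ^ 2 * (v x)⁻¹ * (v x * (v x)⁻¹) := by ring
          _ ≤ F x ^ 2 * (v x)⁻¹ := mul_le_of_le_one_right' (ENNReal.mul_inv_le_one _)

end Schur

lemma exists_int_mem_Ioc_two_zpow {d r : ℝ≥0∞} (hd₀ : d ≠ 0) (hd : d ≠ ⊤) (hr₀ : r ≠ 0)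
    (hr : r ≠ ⊤) : ∃ k : ℤ, d ∈ Ioc (r * 2 ^ k) (2 * (r * 2 ^ k)) := by
  obtain ⟨k, hk_lt, hk_le⟩ := ENNReal.exists_mem_Ioc_zpow (x := d / r) (y := 2)
    (ENNReal.div_ne_zero.2 ⟨hd₀, hr⟩) (div_ne_top hd hr₀) one_lt_two (by simp)
  refine ⟨k, ?_, ?_⟩
  · rw [mul_comm]
    exact (ENNReal.lt_div_iff_mul_lt (Or.inl hr₀) (Or.inl hr)).1 hk_lt
  · rw [ENNReal.zpow_add (by simp) (by simp), zpow_one,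
      ENNReal.div_le_iff_le_mul (Or.inl hr₀) (Or.inl hr)] at hk_le
    exact hk_le.trans_eq (by ring)

section Metric

variable {X : Type*} [PseudoMetricSpace X]

lemma closedEBall_subset_iUnion_annulus (x : X) {r : ℝ≥0∞} (hr₀ : r ≠ 0) (hr : r ≠ ⊤) :
    closedEBall x r ⊆ {y | edist x y = 0} ∪
      ⋃ k : ℕ, {y | edist x y ∈ Ioc (r * 2⁻¹ * 2⁻¹ ^ k) (2 * (r * 2⁻¹ * 2⁻¹ ^ k))} := by
  intro y hy
  rw [mem_closedEBall'] at hy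
  refine or_iff_not_imp_left.2 fun h₀ ↦ ?_
  obtain ⟨k, hk⟩ := exists_int_mem_Ioc_two_zpow h₀ (edist_ne_top x y) hr₀ hr
  have hk_neg : k < 0 := by
    by_contra! hk₀
    refine (hk.1.trans_le hy).not_ge (le_mul_of_one_le_right' ?_)
    lift k to ℕ using hk₀
    rw [zpow_natCast]
    exact one_le_pow₀ (one_le_two (α := ℝ≥0∞))
  obtain ⟨m, rfl⟩ := Int.eq_negSucc_of_lt_zero hk_neg
  refine mem_iUnion.2 ⟨m, ?_⟩
  rwa [zpow_negSucc, ENNReal.inv_pow, pow_succ', ← mul_assoc] at hk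

lemma compl_closedEBall_subset_iUnion_annulus (x : X) {r : ℝ≥0∞} (hr₀ : r ≠ 0) (hr : r ≠ ⊤) :
    (closedEBall x r)ᶜ ⊆ ⋃ k : ℕ, {y | edist x y ∈ Ioc (r * 2 ^ k) (2 * (r * 2 ^ k))} := by
  intro y hy
  rw [mem_compl_iff, mem_closedEBall', not_le] at hy
  obtain ⟨k, hk⟩ := exists_int_mem_Ioc_two_zpow (zero_le.trans_lt hy).ne' (edist_ne_top x y) hr₀ hr
  have hk_nonneg : 0 ≤ k := by
    by_contra! hk_neg
    obtain ⟨m, rfl⟩ := Int.eq_negSucc_of_lt_zero hk_neg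
    refine (hy.trans_le hk.2).not_ge ?_
    calc 2 * (r * 2 ^ Int.negSucc m) = r * (2⁻¹ ^ m * (2 * 2⁻¹)) := by
          rw [zpow_negSucc, ENNReal.inv_pow, pow_succ]
          ring
      _ ≤ r := by
          rw [ENNReal.mul_inv_cancel (by simp) (by simp), mul_one]
          exact mul_le_of_le_one_right' (pow_le_one' (by simp) m)
  lift k to ℕ using hk_nonneg
  rw [zpow_natCast] at hk
  exact mem_iUnion.2 ⟨k, hk⟩

lemma edist_div_two_le_of_edist_le {x y z : X} (h : edist x y ≤ edist y z) :
    edist x z / 2 ≤ edist y z := by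
  rw [ENNReal.div_le_iff two_ne_zero ofNat_ne_top, mul_two]
  exact (edist_triangle x y z).trans (by gcongr)

/-- The Riesz kernel `d(x, y) ^ (-t)`, written with the inverse distance so that it is monotone in
`(edist x y)⁻¹` for `0 ≤ t`. In dimension `d` the potential `I_γ` has kernel exponent `d - γ`. -/
def rieszKernel (t : ℝ) (x y : X) : ℝ≥0∞ :=
  (edist x y)⁻¹ ^ t

lemma rieszKernel_comm (t : ℝ) (x y : X) : rieszKernel t x y = rieszKernel t y x := by
  rw [rieszKernel, rieszKernel, edist_comm]

lemma rieszKernel_le_inv_rpow {t : ℝ} (ht : 0 ≤ t) {x y : X} {r : ℝ≥0∞} (h : r ≤ edist x y) :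
    rieszKernel t x y ≤ r⁻¹ ^ t :=
  rpow_le_rpow (ENNReal.inv_le_inv.2 h) ht

lemma rieszKernel_ne_zero {t : ℝ} (ht : 0 ≤ t) (x y : X) : rieszKernel t x y ≠ 0 :=
  (rpow_pos_of_nonneg (ENNReal.inv_pos.2 (edist_ne_top x y)) ht).ne'

lemma rieszKernel_add {t u : ℝ} (ht : 0 ≤ t) (hu : 0 ≤ u) (x y : X) :
    rieszKernel (t + u) x y = rieszKernel t x y * rieszKernel u x y :=
  rpow_add_of_nonneg t u ht hu

lemma rieszKernel_le_rpow_mul_rieszKernel {t u : ℝ} (ht : 0 ≤ t) (htu : t ≤ u) {x y : X}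
    {r : ℝ≥0∞} (hr₀ : r ≠ 0) (hr : r ≠ ⊤) (h : edist x y ≤ r) :
    rieszKernel t x y ≤ r ^ (u - t) * rieszKernel u x y := by
  calc rieszKernel t x y = r ^ (u - t) * (r⁻¹ ^ (u - t) * rieszKernel t x y) := by
        rw [inv_rpow, ← mul_assoc, ENNReal.mul_inv_cancel (by simp [hr₀, hr]) (by finiteness),
          one_mul]
    _ ≤ r ^ (u - t) * (rieszKernel (u - t) x y * rieszKernel t x y) := by
        gcongr
        exact rpow_le_rpow (ENNReal.inv_le_inv.2 h) (sub_nonneg.2 htu)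
    _ = r ^ (u - t) * rieszKernel u x y := by
        rw [← rieszKernel_add (sub_nonneg.2 htu) ht, sub_add_cancel]

end Metric

section Growth

variable {X : Type*} [PseudoMetricSpace X] [MeasurableSpace X]

/-- `ν` has growth of order `s` with constant `A`: closed balls satisfy `ν (B(x, r)) ≤ A r ^ s`.
Radii are finite and nonzero extended nonnegative reals. -/
def HasGrowth (ν : Measure X) (s : ℝ) (A : ℝ≥0) : Prop :=
  ∀ (x : X) (r : ℝ≥0∞), r ≠ 0 → r ≠ ⊤ → ν (closedEBall x r) ≤ A * r ^ s

/-- The Riesz potential of a measure, parametrized by the exponent `t` of its kernel: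
in dimension `d`, the potential `I_γ μ` is `rieszPotential (d - γ) μ`. -/
def rieszPotential (t : ℝ) (μ : Measure X) (x : X) : ℝ≥0∞ :=
  ∫⁻ y, rieszKernel t x y ∂μ

lemma HasGrowth.measure_closedEBall_lt_top {ν : Measure X} {s : ℝ} {A : ℝ≥0}
    (hν : HasGrowth ν s A) (x : X) {r : ℝ≥0∞} (hr₀ : r ≠ 0) (hr : r ≠ ⊤) :
    ν (closedEBall x r) < ⊤ :=
  (hν x r hr₀ hr).trans_lt <| mul_lt_top coe_lt_top (rpow_ne_top_of_ne_zero hr₀ hr).lt_top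

lemma ae_lt_top_of_setLIntegral_closedEBall_ne_top [SecondCountableTopology X] {ν : Measure X}
    {f : X → ℝ≥0∞} (hf : Measurable f) (h : ∀ x, ∫⁻ y in closedEBall x 1, f y ∂ν ≠ ⊤) :
    ∀ᵐ x ∂ν, f x < ⊤ := by
  refine measure_null_of_locally_null _ fun x _ ↦
    ⟨_, inter_mem_nhdsWithin _ (closedEBall_mem_nhds x one_pos), ?_⟩
  exact le_antisymm ((Measure.le_restrict_apply _ _).trans_eq (ae_lt_top hf (h x))) zero_le

lemma HasGrowth.isLocallyFiniteMeasure {ν : Measure X} {s : ℝ} {A : ℝ≥0} (hν : HasGrowth ν s A) :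
    IsLocallyFiniteMeasure ν :=
  ⟨fun x ↦ ⟨closedEBall x 1, closedEBall_mem_nhds x one_pos,
    hν.measure_closedEBall_lt_top x one_ne_zero one_ne_top⟩⟩

lemma HasGrowth.const_ne_zero [SecondCountableTopology X] {ν : Measure X} [NeZero ν]
    {s : ℝ} {A : ℝ≥0} (hν : HasGrowth ν s A) : A ≠ 0 := by
  rintro rfl
  refine NeZero.ne ν (Measure.measure_univ_eq_zero.1 <| measure_null_of_locally_null _ fun x _ ↦
    ⟨closedEBall x 1, mem_nhdsWithin_of_mem_nhds (closedEBall_mem_nhds x one_pos), ?_⟩)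
  simpa using hν x 1 one_ne_zero one_ne_top

lemma HasGrowth.measure_edist_eq_zero {ν : Measure X} {s : ℝ} {A : ℝ≥0} (hs : 0 < s)
    (hν : HasGrowth ν s A) (x : X) : ν {y | edist x y = 0} = 0 := by
  have h_lim : Tendsto (fun r : ℝ≥0∞ ↦ A * r ^ s) (𝓝[>] 0) (𝓝 0) := by
    have h : Tendsto (fun r : ℝ≥0∞ ↦ A * r ^ s) (𝓝 0) (𝓝 (A * 0 ^ s)) :=
      ENNReal.Tendsto.const_mul (continuous_rpow_const.tendsto 0) (Or.inr coe_ne_top)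
    rw [zero_rpow_of_pos hs, mul_zero] at h
    exact h.mono_left nhdsWithin_le_nhds
  refine le_antisymm (ge_of_tendsto h_lim ?_) zero_le
  filter_upwards [Ioo_mem_nhdsGT (zero_lt_one (α := ℝ≥0∞))] with r hr
  refine (measure_mono fun y (hy : edist x y = 0) ↦ ?_).trans
    (hν x r hr.1.ne' (hr.2.trans one_lt_top).ne)
  exact mem_closedEBall'.2 (hy.trans_le zero_le)

lemma HasGrowth.setLIntegral_annulus_le {ν : Measure X} {s : ℝ} {A : ℝ≥0} (hν : HasGrowth ν s A)
    {t : ℝ} (ht : 0 ≤ t) (x : X) {r : ℝ≥0∞} (hr₀ : r ≠ 0) (hr : r ≠ ⊤) :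
    ∫⁻ y in {y | edist x y ∈ Ioc r (2 * r)}, rieszKernel t x y ∂ν ≤ 2 ^ s * A * r ^ (s - t) := by
  calc ∫⁻ y in {y | edist x y ∈ Ioc r (2 * r)}, rieszKernel t x y ∂ν
      ≤ ∫⁻ _ in {y | edist x y ∈ Ioc r (2 * r)}, r⁻¹ ^ t ∂ν :=
        setLIntegral_mono measurable_const fun y hy ↦ rieszKernel_le_inv_rpow ht hy.1.le
    _ = r⁻¹ ^ t * ν {y | edist x y ∈ Ioc r (2 * r)} := setLIntegral_const _ _
    _ ≤ r⁻¹ ^ t * ν (closedEBall x (2 * r)) := by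
        gcongr
        exact fun y hy ↦ mem_closedEBall'.2 hy.2
    _ ≤ r⁻¹ ^ t * (A * (2 * r) ^ s) := by
        gcongr
        exact hν x _ (by simpa using hr₀) (by finiteness)
    _ = 2 ^ s * A * r ^ (s - t) := by
        rw [mul_rpow_of_ne_top (by simp) hr, rpow_sub _ _ hr₀ hr, inv_rpow, div_eq_mul_inv]
        ring

lemma HasGrowth.setLIntegral_iUnion_annulus_le {ν : Measure X} {s : ℝ} {A : ℝ≥0}
    (hν : HasGrowth ν s A) {t : ℝ} (ht : 0 ≤ t) (x : X) {r q : ℝ≥0∞} (hr₀ : r ≠ 0) (hr : r ≠ ⊤)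
    (hq₀ : q ≠ 0) (hq : q ≠ ⊤) :
    ∫⁻ y in ⋃ k : ℕ, {y | edist x y ∈ Ioc (r * q ^ k) (2 * (r * q ^ k))}, rieszKernel t x y ∂ν ≤
      2 ^ s * (1 - q ^ (s - t))⁻¹ * A * r ^ (s - t) := by
  have h_pow (k : ℕ) : (r * q ^ k) ^ (s - t) = r ^ (s - t) * (q ^ (s - t)) ^ k := by
    rw [mul_rpow_of_ne_top hr (by finiteness), ← rpow_natCast, ← rpow_natCast, ← rpow_mul,
      ← rpow_mul, mul_comm (k : ℝ)]
  calc ∫⁻ y in ⋃ k : ℕ, {y | edist x y ∈ Ioc (r * q ^ k) (2 * (r * q ^ k))}, rieszKernel t x y ∂ν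
      ≤ ∑' k : ℕ, 2 ^ s * A * (r * q ^ k) ^ (s - t) :=
        (lintegral_iUnion_le _ _).trans <| ENNReal.tsum_le_tsum fun k ↦
          hν.setLIntegral_annulus_le ht x (mul_ne_zero hr₀ (pow_ne_zero k hq₀)) (by finiteness)
    _ = 2 ^ s * (1 - q ^ (s - t))⁻¹ * A * r ^ (s - t) := by
        simp only [h_pow, ENNReal.tsum_mul_left, ENNReal.tsum_geometric]
        ring

lemma exists_setLIntegral_closedEBall_rieszKernel_le {s t : ℝ} (ht : 0 ≤ t) (hts : t < s) :
    ∃ C : ℝ≥0, ∀ {ν : Measure X} {A : ℝ≥0}, HasGrowth ν s A →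
      ∀ (x : X) {r : ℝ≥0∞}, r ≠ 0 → r ≠ ⊤ →
        ∫⁻ y in closedEBall x r, rieszKernel t x y ∂ν ≤ C * A * r ^ (s - t) := by
  have h_ratio : (2⁻¹ : ℝ≥0∞) ^ (s - t) < 1 := rpow_lt_one (by simp) (sub_pos.2 hts)
  have h_fin : 2 ^ s * (1 - (2⁻¹ : ℝ≥0∞) ^ (s - t))⁻¹ ≠ ⊤ :=
    mul_ne_top (by finiteness) (inv_ne_top.2 (tsub_pos_of_lt h_ratio).ne')
  lift 2 ^ s * (1 - (2⁻¹ : ℝ≥0∞) ^ (s - t))⁻¹ to ℝ≥0 using h_fin with C hC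
  refine ⟨C, fun {ν A} hν x r hr₀ hr ↦ ?_⟩
  calc ∫⁻ y in closedEBall x r, rieszKernel t x y ∂ν
      ≤ 0 + 2 ^ s * (1 - 2⁻¹ ^ (s - t))⁻¹ * A * (r * 2⁻¹) ^ (s - t) := by
        refine (lintegral_mono_set (closedEBall_subset_iUnion_annulus x hr₀ hr)).trans <|
          (lintegral_union_le _ _ _).trans <| add_le_add ?_ ?_
        · exact (setLIntegral_measure_zero _ _
            (hν.measure_edist_eq_zero (ht.trans_lt hts) x)).le
        · exact hν.setLIntegral_iUnion_annulus_le ht x (by simp [hr₀]) (by finiteness) (by simp)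
            (by simp)
    _ ≤ C * A * r ^ (s - t) := by
        rw [zero_add, hC]
        gcongr
        exact mul_le_of_le_one_right' (by simp)

lemma exists_setLIntegral_compl_closedEBall_rieszKernel_le {s t : ℝ} (ht : 0 ≤ t) (hst : s < t) :
    ∃ C : ℝ≥0, ∀ {ν : Measure X} {A : ℝ≥0}, HasGrowth ν s A →
      ∀ (x : X) {r : ℝ≥0∞}, r ≠ 0 → r ≠ ⊤ →
        ∫⁻ y in (closedEBall x r)ᶜ, rieszKernel t x y ∂ν ≤ C * A * r ^ (s - t) := by
  have h_ratio : (2 : ℝ≥0∞) ^ (s - t) < 1 :=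
    rpow_lt_one_of_one_lt_of_neg one_lt_two (sub_neg.2 hst)
  have h_fin : 2 ^ s * (1 - (2 : ℝ≥0∞) ^ (s - t))⁻¹ ≠ ⊤ :=
    mul_ne_top (by finiteness) (inv_ne_top.2 (tsub_pos_of_lt h_ratio).ne')
  lift 2 ^ s * (1 - (2 : ℝ≥0∞) ^ (s - t))⁻¹ to ℝ≥0 using h_fin with C hC
  refine ⟨C, fun {ν A} hν x r hr₀ hr ↦ ?_⟩
  rw [hC]
  exact (lintegral_mono_set (compl_closedEBall_subset_iUnion_annulus x hr₀ hr)).trans <|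
    hν.setLIntegral_iUnion_annulus_le ht x hr₀ hr (by simp) (by simp)

lemma HasGrowth.ae_ne_top_of_withDensity_rpow [SecondCountableTopology X] {σ : Measure X}
    [SFinite σ] {v : X → ℝ≥0∞} (hv : Measurable v) {p s : ℝ} (hp : 0 < p) {A : ℝ≥0}
    (hμ : HasGrowth (σ.withDensity fun y ↦ v y ^ p) s A) : ∀ᵐ y ∂σ, v y ≠ ⊤ := by
  have h_fin (x : X) : ∫⁻ y in closedEBall x 1, v y ^ p ∂σ ≠ ⊤ := by
    rw [← withDensity_apply']
    exact (hμ.measure_closedEBall_lt_top x one_ne_zero one_ne_top).ne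
  filter_upwards [ae_lt_top_of_setLIntegral_closedEBall_ne_top (by fun_prop) h_fin] with y hy
  exact ((rpow_lt_top_iff_of_pos hp).1 hy).ne

end Growth

section Potential

variable {X : Type*} [PseudoMetricSpace X] [SecondCountableTopology X] [MeasurableSpace X]
  [OpensMeasurableSpace X]

@[fun_prop]
lemma measurable_rieszKernel {Y : Type*} [MeasurableSpace Y] {f g : Y → X} (t : ℝ)
    (hf : Measurable f) (hg : Measurable g) : Measurable fun a ↦ rieszKernel t (f a) (g a) :=
  (hf.edist hg).inv.pow_const t

@[fun_prop]
lemma measurable_rieszPotential (t : ℝ) (μ : Measure X) [SFinite μ] :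
    Measurable (rieszPotential t μ) :=
  Measurable.lintegral_prod_right' (f := fun z : X × X ↦ rieszKernel t z.1 z.2) (by fun_prop)

lemma setLIntegral_inter_closedEBall_rieszKernel_mul_rieszKernel_le (σ : Measure X) {t u : ℝ}
    (hu : 0 ≤ u) (x z : X) (r : ℝ≥0∞) :
    ∫⁻ y in {y | edist x y ≤ edist y z} ∩ closedEBall x r,
        rieszKernel t x y * rieszKernel u y z ∂σ ≤
      (edist x z / 2)⁻¹ ^ u * ∫⁻ y in closedEBall x r, rieszKernel t x y ∂σ := by
  calc ∫⁻ y in {y | edist x y ≤ edist y z} ∩ closedEBall x r,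
        rieszKernel t x y * rieszKernel u y z ∂σ
      ≤ ∫⁻ y in {y | edist x y ≤ edist y z} ∩ closedEBall x r,
          (edist x z / 2)⁻¹ ^ u * rieszKernel t x y ∂σ := by
        refine setLIntegral_mono (by fun_prop) fun y hy ↦ ?_
        rw [mul_comm]
        gcongr
        exact rieszKernel_le_inv_rpow hu (edist_div_two_le_of_edist_le hy.1)
    _ ≤ (edist x z / 2)⁻¹ ^ u * ∫⁻ y in closedEBall x r, rieszKernel t x y ∂σ := by
        rw [lintegral_const_mul _ (by fun_prop)]
        gcongr
        exact inter_subset_right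

lemma setLIntegral_inter_compl_closedEBall_rieszKernel_mul_rieszKernel_le (σ : Measure X)
    {t u : ℝ} (ht : 0 ≤ t) (hu : 0 ≤ u) (x z : X) (r : ℝ≥0∞) :
    ∫⁻ y in {y | edist x y ≤ edist y z} ∩ (closedEBall x r)ᶜ,
        rieszKernel t x y * rieszKernel u y z ∂σ ≤
      ∫⁻ y in (closedEBall x r)ᶜ, rieszKernel (t + u) x y ∂σ := by
  refine (setLIntegral_mono (by fun_prop) fun y hy ↦ ?_).trans
    (lintegral_mono_set inter_subset_right)
  rw [rieszKernel_add ht hu]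
  gcongr
  exact rieszKernel_le_inv_rpow hu hy.1

lemma exists_setLIntegral_rieszKernel_mul_rieszKernel_le {d t u : ℝ} (ht : 0 ≤ t) (htd : t < d)
    (hu : 0 ≤ u) (hd : d < t + u) :
    ∃ C : ℝ≥0, ∀ {σ : Measure X} {B : ℝ≥0}, HasGrowth σ d B → ∀ {x z : X}, edist x z ≠ 0 →
      ∫⁻ y in {y | edist x y ≤ edist y z}, rieszKernel t x y * rieszKernel u y z ∂σ ≤
        C * B * rieszKernel (t + u - d) x z := by
  obtain ⟨C₁, h_near⟩ := exists_setLIntegral_closedEBall_rieszKernel_le (X := X) ht htd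
  obtain ⟨C₂, h_far⟩ :=
    exists_setLIntegral_compl_closedEBall_rieszKernel_le (X := X) (add_nonneg ht hu) hd
  refine ⟨2 ^ u * C₁ + C₂, fun {σ B} hσ x z hxz ↦ ?_⟩
  set R := edist x z with hR
  have hR_top : R ≠ ⊤ := edist_ne_top x z
  have h_kernel : rieszKernel (t + u - d) x z = R ^ (d - (t + u)) := by
    rw [rieszKernel, ← hR, inv_rpow, ← rpow_neg, neg_sub]
  have h_pow : (R / 2)⁻¹ ^ u * R ^ (d - t) = 2 ^ u * R ^ (d - (t + u)) := by
    rw [ENNReal.inv_div (by simp) (by simp), div_rpow_of_nonneg _ _ hu, ENNReal.div_eq_inv_mul,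
      ← rpow_neg, mul_right_comm, ← rpow_add _ _ hxz hR_top, mul_comm]
    ring_nf
  calc ∫⁻ y in {y | edist x y ≤ edist y z}, rieszKernel t x y * rieszKernel u y z ∂σ
      ≤ (R / 2)⁻¹ ^ u * (∫⁻ y in closedEBall x R, rieszKernel t x y ∂σ) +
          ∫⁻ y in (closedEBall x R)ᶜ, rieszKernel (t + u) x y ∂σ := by
        rw [← inter_union_compl {y | edist x y ≤ edist y z} (closedEBall x R)]
        exact (lintegral_union_le _ _ _).trans <| add_le_add
          (setLIntegral_inter_closedEBall_rieszKernel_mul_rieszKernel_le σ hu x z R)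
          (setLIntegral_inter_compl_closedEBall_rieszKernel_mul_rieszKernel_le σ ht hu x z R)
    _ ≤ (R / 2)⁻¹ ^ u * (C₁ * B * R ^ (d - t)) + C₂ * B * R ^ (d - (t + u)) := by
        gcongr
        · exact h_near hσ x hxz hR_top
        · exact h_far hσ x hxz hR_top
    _ = ↑(2 ^ u * C₁ + C₂) * B * rieszKernel (t + u - d) x z := by
        rw [h_kernel, mul_left_comm, h_pow, coe_add, coe_mul, coe_rpow_of_nonneg _ hu, coe_ofNat]
        ring

lemma exists_lintegral_rieszKernel_mul_rieszKernel_le {d t u : ℝ} (ht : 0 ≤ t) (htd : t < d)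
    (hu : 0 ≤ u) (hud : u < d) (hd : d < t + u) :
    ∃ C : ℝ≥0, ∀ {σ : Measure X} {B : ℝ≥0}, HasGrowth σ d B → ∀ {x z : X}, edist x z ≠ 0 →
      ∫⁻ y, rieszKernel t x y * rieszKernel u y z ∂σ ≤ C * B * rieszKernel (t + u - d) x z := by
  obtain ⟨C₁, h₁⟩ := exists_setLIntegral_rieszKernel_mul_rieszKernel_le (X := X) ht htd hu hd
  obtain ⟨C₂, h₂⟩ :=
    exists_setLIntegral_rieszKernel_mul_rieszKernel_le (X := X) hu hud ht (add_comm t u ▸ hd)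
  refine ⟨C₁ + C₂, fun {σ B} hσ x z hxz ↦ ?_⟩
  have h_swap : ∫⁻ y in {y | edist x y ≤ edist y z}ᶜ, rieszKernel t x y * rieszKernel u y z ∂σ ≤
      C₂ * B * rieszKernel (t + u - d) x z := by
    calc ∫⁻ y in {y | edist x y ≤ edist y z}ᶜ, rieszKernel t x y * rieszKernel u y z ∂σ
        ≤ ∫⁻ y in {y | edist z y ≤ edist y x}, rieszKernel u z y * rieszKernel t y x ∂σ := by
          simp only [mul_comm (rieszKernel t _ _), rieszKernel_comm t x, rieszKernel_comm u _ z]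
          refine lintegral_mono_set fun y hy ↦ ?_
          rw [mem_compl_iff, mem_ofPred_eq, not_le] at hy
          rw [mem_ofPred_eq, edist_comm z, edist_comm y x]
          exact hy.le
      _ ≤ C₂ * B * rieszKernel (t + u - d) x z := by
          rw [rieszKernel_comm, add_comm t]
          exact h₂ hσ (edist_comm x z ▸ hxz)
  calc ∫⁻ y, rieszKernel t x y * rieszKernel u y z ∂σ
      ≤ C₁ * B * rieszKernel (t + u - d) x z + C₂ * B * rieszKernel (t + u - d) x z := by
        rw [← setLIntegral_univ, ← union_compl_self {y | edist x y ≤ edist y z}]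
        exact (lintegral_union_le _ _ _).trans (add_le_add (h₁ hσ hxz) h_swap)
    _ = ↑(C₁ + C₂) * B * rieszKernel (t + u - d) x z := by
        push_cast
        ring

lemma exists_lintegral_rieszKernel_mul_rieszPotential_le {d t u : ℝ} (ht : 0 ≤ t) (htd : t < d)
    (hu : 0 ≤ u) (hud : u < d) (hd : d < t + u) {σ : Measure X} [SFinite σ] {B : ℝ≥0}
    (hσ : HasGrowth σ d B) :
    ∃ C : ℝ≥0, ∀ (μ : Measure X) [SFinite μ] (x : X),
      ∫⁻ y, rieszKernel t x y * rieszPotential u μ y ∂σ ≤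
        C * rieszPotential (t + u - d) μ x := by
  obtain ⟨C, hC⟩ := exists_lintegral_rieszKernel_mul_rieszKernel_le (X := X) ht htd hu hud hd
  have h_kernel (x z : X) : ∫⁻ y, rieszKernel t x y * rieszKernel u y z ∂σ ≤
      ↑(C * B + 1) * rieszKernel (t + u - d) x z := by
    rcases eq_or_ne (edist x z) 0 with h₀ | h₀
    · rw [rieszKernel.eq_def (t + u - d), h₀, ENNReal.inv_zero, top_rpow_of_pos (sub_pos.2 hd),
        mul_top (by simp)]
      exact le_top
    · refine (hC hσ h₀).trans ?_
      gcongr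
      exact_mod_cast le_self_add
  refine ⟨C * B + 1, fun μ _ x ↦ ?_⟩
  calc ∫⁻ y, rieszKernel t x y * rieszPotential u μ y ∂σ
      = ∫⁻ y, ∫⁻ z, rieszKernel t x y * rieszKernel u y z ∂μ ∂σ := by
        refine lintegral_congr fun y ↦ ?_
        rw [rieszPotential, lintegral_const_mul _ (by fun_prop)]
    _ = ∫⁻ z, ∫⁻ y, rieszKernel t x y * rieszKernel u y z ∂σ ∂μ :=
        lintegral_lintegral_swap (by fun_prop)
    _ ≤ ∫⁻ z, ↑(C * B + 1) * rieszKernel (t + u - d) x z ∂μ := lintegral_mono (h_kernel x)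
    _ = ↑(C * B + 1) * rieszPotential (t + u - d) μ x := lintegral_const_mul _ (by fun_prop)

lemma rieszPotential_ne_zero {t : ℝ} (ht : 0 ≤ t) (μ : Measure X) [NeZero μ] (x : X) :
    rieszPotential t μ x ≠ 0 := by
  intro h₀
  rw [rieszPotential, lintegral_eq_zero_iff (by fun_prop)] at h₀
  obtain ⟨y, hy⟩ := h₀.exists
  exact rieszKernel_ne_zero ht x y hy

lemma exists_rieszPotential_le_add {s t u : ℝ} (ht : 0 ≤ t) (hst : s < t) (htu : t ≤ u) :
    ∃ C : ℝ≥0, ∀ {μ : Measure X} {A : ℝ≥0}, HasGrowth μ s A →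
      ∀ (x : X) {r : ℝ≥0∞}, r ≠ 0 → r ≠ ⊤ →
        rieszPotential t μ x ≤ r ^ (u - t) * rieszPotential u μ x + C * (A * r ^ (s - t)) := by
  obtain ⟨C, h_far⟩ := exists_setLIntegral_compl_closedEBall_rieszKernel_le (X := X) ht hst
  refine ⟨C, fun {μ A} hμ x r hr₀ hr ↦ ?_⟩
  have h_near : ∫⁻ y in closedEBall x r, rieszKernel t x y ∂μ ≤
      r ^ (u - t) * rieszPotential u μ x := by
    calc ∫⁻ y in closedEBall x r, rieszKernel t x y ∂μ
        ≤ ∫⁻ y in closedEBall x r, r ^ (u - t) * rieszKernel u x y ∂μ :=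
          setLIntegral_mono (by fun_prop) fun y hy ↦
            rieszKernel_le_rpow_mul_rieszKernel ht htu hr₀ hr (mem_closedEBall'.1 hy)
      _ ≤ r ^ (u - t) * rieszPotential u μ x := by
          rw [lintegral_const_mul _ (by fun_prop)]
          gcongr
          exact setLIntegral_le_lintegral _ _
  rw [rieszPotential, ← setLIntegral_univ, ← union_compl_self (closedEBall x r), ← mul_assoc]
  exact (lintegral_union_le _ _ _).trans (add_le_add h_near (h_far hμ x hr₀ hr))

lemma exists_rpow_mul_eq_mul_rpow {s t u : ℝ} (hsu : s < u) {A P : ℝ≥0∞} (hA₀ : A ≠ 0)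
    (hA : A ≠ ⊤) (hP₀ : P ≠ 0) (hP : P ≠ ⊤) :
    ∃ r : ℝ≥0∞, r ≠ 0 ∧ r ≠ ⊤ ∧
      r ^ (u - t) * P = A ^ ((u - t) / (u - s)) * P ^ ((t - s) / (u - s)) ∧
      A * r ^ (s - t) = A ^ ((u - t) / (u - s)) * P ^ ((t - s) / (u - s)) := by
  have hus : u - s ≠ 0 := (sub_pos.2 hsu).ne'
  have h_pow (a : ℝ) :
      ((A / P) ^ (1 / (u - s))) ^ a = A ^ (a / (u - s)) * P ^ (-(a / (u - s))) := by
    rw [← rpow_mul, one_div_mul_eq_div, ENNReal.div_eq_inv_mul,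
      mul_rpow_of_ne_top (by simpa using hP₀) hA, inv_rpow, ← rpow_neg, mul_comm]
  refine ⟨(A / P) ^ (1 / (u - s)), ?_, ?_, ?_, ?_⟩
  · simp [hA₀, hP, ENNReal.div_eq_top, hA, hP₀]
  · simp [ENNReal.div_eq_zero_iff, hA₀, hP, ENNReal.div_eq_top, hA, hP₀]
  · have h_exp : (t - s) / (u - s) = -((u - t) / (u - s)) + 1 := by
      field_simp
      ring
    rw [h_pow, h_exp, rpow_add _ _ hP₀ hP, rpow_one, mul_assoc]
  · have h_exp : (u - t) / (u - s) = 1 + (s - t) / (u - s) := by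
      field_simp
      ring
    rw [h_pow, h_exp, rpow_add _ _ hA₀ hA, rpow_one, ← neg_div, neg_sub, mul_assoc]

-- Hedberg's inequality: the radius equalizes the two terms of `exists_rieszPotential_le_add`.
lemma exists_rieszPotential_le_rpow_mul_rpow {s t u : ℝ} (ht : 0 ≤ t) (hst : s < t)
    (htu : t ≤ u) :
    ∃ C : ℝ≥0, ∀ {μ : Measure X} [NeZero μ] {A : ℝ≥0}, HasGrowth μ s A → ∀ x : X,
      rieszPotential t μ x ≤
        C * A ^ ((u - t) / (u - s)) * rieszPotential u μ x ^ ((t - s) / (u - s)) := by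
  obtain ⟨C, h_split⟩ := exists_rieszPotential_le_add (X := X) ht hst htu
  refine ⟨1 + C, fun {μ _ A} hμ x ↦ ?_⟩
  have hsu : s < u := hst.trans_le htu
  have hA₀ : (A : ℝ≥0∞) ≠ 0 := by exact_mod_cast hμ.const_ne_zero
  have hP₀ := rieszPotential_ne_zero (ht.trans htu) μ x
  set P := rieszPotential u μ x
  rcases eq_or_ne P ⊤ with hP | hP
  · rw [hP, top_rpow_of_pos (div_pos (sub_pos.2 hst) (sub_pos.2 hsu)), mul_top]
    · exact le_top
    · exact mul_ne_zero (by simp) (by simp [hA₀])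
  obtain ⟨r, hr₀, hr, h_near, h_far⟩ :=
    exists_rpow_mul_eq_mul_rpow (t := t) hsu hA₀ coe_ne_top hP₀ hP
  calc rieszPotential t μ x
      ≤ r ^ (u - t) * P + C * (A * r ^ (s - t)) := h_split hμ x hr₀ hr
    _ = ↑(1 + C) * A ^ ((u - t) / (u - s)) * P ^ ((t - s) / (u - s)) := by
        rw [h_near, h_far]
        push_cast
        ring

lemma setLIntegral_setLIntegral_rieszKernel_lt_top {d u : ℝ} (hu : 0 ≤ u) (hud : u < d)
    {σ μ : Measure X} [SFinite σ] [SFinite μ] {B : ℝ≥0} (hσ : HasGrowth σ d B) (x : X)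
    (hμ : μ (closedEBall x 2) < ⊤) :
    ∫⁻ y in closedEBall x 1, ∫⁻ z in closedEBall x 2, rieszKernel u y z ∂μ ∂σ < ⊤ := by
  obtain ⟨C, hC⟩ := exists_setLIntegral_closedEBall_rieszKernel_le (X := X) hu hud
  have h_inner : ∀ z ∈ closedEBall x 2, ∫⁻ y in closedEBall x 1, rieszKernel u y z ∂σ ≤
      C * B * 3 ^ (d - u) := by
    intro z hz
    simp only [rieszKernel_comm u _ z]
    refine (lintegral_mono_set fun y hy ↦ ?_).trans (hC hσ z (by simp) (by simp))
    calc edist y z ≤ edist y x + edist x z := edist_triangle _ _ _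
      _ ≤ 1 + 2 := add_le_add hy (mem_closedEBall'.1 hz)
      _ = 3 := by norm_num
  calc ∫⁻ y in closedEBall x 1, ∫⁻ z in closedEBall x 2, rieszKernel u y z ∂μ ∂σ
      = ∫⁻ z in closedEBall x 2, ∫⁻ y in closedEBall x 1, rieszKernel u y z ∂σ ∂μ :=
        lintegral_lintegral_swap (by fun_prop)
    _ ≤ ∫⁻ _ in closedEBall x 2, C * B * 3 ^ (d - u) ∂μ :=
        setLIntegral_mono measurable_const h_inner
    _ = C * B * 3 ^ (d - u) * μ (closedEBall x 2) := setLIntegral_const _ _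
    _ < ⊤ := mul_lt_top (by finiteness) hμ

lemma ae_rieszPotential_ne_top {d s u : ℝ} (hu : 0 ≤ u) (hsu : s < u) (hud : u < d)
    {σ μ : Measure X} {A B : ℝ≥0} (hσ : HasGrowth σ d B) (hμ : HasGrowth μ s A) :
    ∀ᵐ x ∂σ, rieszPotential u μ x ≠ ⊤ := by
  have := hσ.isLocallyFiniteMeasure
  have := hμ.isLocallyFiniteMeasure
  obtain ⟨C, h_far⟩ := exists_setLIntegral_compl_closedEBall_rieszKernel_le (X := X) hu hsu
  have h_le (x : X) : ∀ y ∈ closedEBall x 1,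
      rieszPotential u μ y ≤ ∫⁻ z in closedEBall x 2, rieszKernel u y z ∂μ + C * A := by
    intro y hy
    rw [rieszPotential, ← setLIntegral_univ, ← union_compl_self (closedEBall x 2)]
    refine (lintegral_union_le _ _ _).trans (add_le_add_right ?_ _)
    calc ∫⁻ z in (closedEBall x 2)ᶜ, rieszKernel u y z ∂μ
        ≤ ∫⁻ z in (closedEBall y 1)ᶜ, rieszKernel u y z ∂μ := by
          refine lintegral_mono_set (compl_subset_compl.2 fun z hz ↦ ?_)
          calc edist z x ≤ edist z y + edist y x := edist_triangle _ _ _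
            _ ≤ 1 + 1 := add_le_add hz hy
            _ = 2 := one_add_one_eq_two
      _ ≤ C * A := by simpa using h_far hμ y one_ne_zero one_ne_top
  have h_fin (x : X) : ∫⁻ y in closedEBall x 1, rieszPotential u μ y ∂σ ≠ ⊤ := by
    refine ((setLIntegral_mono (by fun_prop) (h_le x)).trans_lt ?_).ne
    rw [lintegral_add_right _ measurable_const, setLIntegral_const]
    exact add_lt_top.2 ⟨setLIntegral_setLIntegral_rieszKernel_lt_top hu hud hσ x
        (hμ.measure_closedEBall_lt_top x two_ne_zero ofNat_ne_top),
      mul_lt_top (by finiteness) (hσ.measure_closedEBall_lt_top x one_ne_zero one_ne_top)⟩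
  filter_upwards [ae_lt_top_of_setLIntegral_closedEBall_ne_top (by fun_prop) h_fin] with y hy
  exact hy.ne

lemma rieszPotential_withDensity {σ : Measure X} {f : X → ℝ≥0∞} (hf : Measurable f) (t : ℝ)
    (x : X) : rieszPotential t (σ.withDensity f) x = ∫⁻ y, rieszKernel t x y * f y ∂σ := by
  rw [rieszPotential, lintegral_withDensity_eq_lintegral_mul _ hf (by fun_prop)]
  simp only [Pi.mul_apply, mul_comm]

lemma lintegral_rieszKernel_mul_rpow_le {σ : Measure X} {p : ℝ} (hp : 1 < p) {t u : ℝ}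
    (ht : 0 ≤ t) (hu : 0 ≤ u) {v U : X → ℝ≥0∞} (hv : Measurable v) (hU : Measurable U) (x : X) :
    ∫⁻ y, rieszKernel (t * (1 / p) + u * (1 - 1 / p)) x y * (v y * U y ^ (1 - 1 / p)) ∂σ ≤
      rieszPotential t (σ.withDensity fun y ↦ v y ^ p) x ^ (1 / p) *
        (∫⁻ y, rieszKernel u x y * U y ∂σ) ^ (1 - 1 / p) := by
  have hp₀ : 0 < p := zero_lt_one.trans hp
  have h_inv : 0 ≤ 1 / p := by positivity
  have h_conj : 0 ≤ 1 - 1 / p := sub_nonneg.2 ((div_le_one hp₀).2 hp.le)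
  have h_kernel_rpow (a b : ℝ) (y : X) : rieszKernel a x y ^ b = rieszKernel (a * b) x y := by
    rw [rieszKernel, ← rpow_mul, rieszKernel]
  rw [rieszPotential_withDensity (by fun_prop)]
  refine le_trans (lintegral_mono fun y ↦ le_of_eq ?_)
    (lintegral_mul_norm_pow_le (by fun_prop) (by fun_prop) h_inv h_conj (add_sub_cancel _ _))
  rw [mul_rpow_of_nonneg _ _ h_inv, mul_rpow_of_nonneg _ _ h_conj, h_kernel_rpow, h_kernel_rpow,
    ← rpow_mul, mul_one_div_cancel hp₀.ne', rpow_one,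
    rieszKernel_add (by positivity) (by positivity)]
  ring

/-- The test function `(I_{αp/2} (v ^ p)) ^ (1 / p')` to which the Schur test is applied, where
`1 / p' = 1 - 1 / p` and the potential is taken with respect to `σ`, in dimension `d`. -/
def schurWeight (σ : Measure X) (d α p : ℝ) (v : X → ℝ≥0∞) (x : X) : ℝ≥0∞ :=
  rieszPotential (d - α * p / 2) (σ.withDensity fun y ↦ v y ^ p) x ^ (1 - 1 / p)

@[fun_prop]
lemma measurable_schurWeight (σ : Measure X) [SFinite σ] (d α p : ℝ) (v : X → ℝ≥0∞) :
    Measurable (schurWeight σ d α p v) :=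
  (measurable_rieszPotential _ _).pow_const _

lemma exists_rieszPotential_le_rpow_mul_schurWeight {d α p : ℝ} (hα : 0 < α) (hp : 1 < p)
    (hαp : α * p ≤ d) :
    ∃ C : ℝ≥0, ∀ {σ : Measure X} {v : X → ℝ≥0∞} {A : ℝ≥0}
      [NeZero (σ.withDensity fun y ↦ v y ^ p)],
      HasGrowth (σ.withDensity fun y ↦ v y ^ p) (d - α * p) A → ∀ x,
        rieszPotential (d - α * (p + 1) / 2) (σ.withDensity fun y ↦ v y ^ p) x ≤
          C * A ^ (1 / p) * schurWeight σ d α p v x := by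
  have hα_lt : α < α * p := lt_mul_of_one_lt_right hα hp
  have h_gap : d - α * p / 2 - (d - α * p) = α * p / 2 := by ring
  have h_exp_growth : (d - α * p / 2 - (d - α * (p + 1) / 2)) / (α * p / 2) = 1 / p := by
    field_simp
    ring
  have h_exp_potential :
      (d - α * (p + 1) / 2 - (d - α * p)) / (α * p / 2) = 1 - 1 / p := by
    field_simp
    ring
  obtain ⟨C, h_hedberg⟩ := exists_rieszPotential_le_rpow_mul_rpow (X := X)
    (s := d - α * p) (t := d - α * (p + 1) / 2) (u := d - α * p / 2)
    (by linarith) (by linarith) (by linarith)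
  rw [h_gap, h_exp_growth, h_exp_potential] at h_hedberg
  exact ⟨C, fun hμ x ↦ h_hedberg hμ x⟩

lemma exists_lintegral_rieszKernel_mul_schurWeight_le {d α p : ℝ} (hα : 0 < α) (hp : 1 < p)
    (hαp : α * p ≤ d) {σ : Measure X} [SFinite σ] {B : ℝ≥0} (hσ : HasGrowth σ d B) :
    ∃ C : ℝ≥0, ∀ {v : X → ℝ≥0∞} {A : ℝ≥0} [NeZero (σ.withDensity fun y ↦ v y ^ p)],
      Measurable v → HasGrowth (σ.withDensity fun y ↦ v y ^ p) (d - α * p) A → ∀ x,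
        ∫⁻ y, rieszKernel (d - α) x y * (v y * schurWeight σ d α p v y) ∂σ ≤
          C * A ^ (1 / p) * schurWeight σ d α p v x := by
  have hα_lt : α < α * p := lt_mul_of_one_lt_right hα hp
  have h_conj : 0 ≤ 1 - 1 / p := sub_nonneg.2 ((div_le_one (by positivity)).2 hp.le)
  obtain ⟨C₁, h_comp⟩ := exists_lintegral_rieszKernel_mul_rieszPotential_le
    (t := d - α / 2) (u := d - α * p / 2) (by linarith) (by linarith) (by linarith) (by linarith)
    (by linarith) hσ
  obtain ⟨C₂, h_hedberg⟩ := exists_rieszPotential_le_rpow_mul_schurWeight (X := X) hα hp hαp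
  refine ⟨C₁ ^ (1 - 1 / p) * C₂, fun {v A} _ hv hμ x ↦ ?_⟩
  have h_exp_comp : d - α / 2 + (d - α * p / 2) - d = d - α * (p + 1) / 2 := by ring
  rw [h_exp_comp] at h_comp
  set μ := σ.withDensity fun y ↦ v y ^ p
  set P := rieszPotential (d - α * (p + 1) / 2) μ x
  have h_exp : d - α = (d - α * (p + 1) / 2) * (1 / p) + (d - α / 2) * (1 - 1 / p) := by
    field_simp
    ring
  calc ∫⁻ y, rieszKernel (d - α) x y * (v y * schurWeight σ d α p v y) ∂σ
      ≤ P ^ (1 / p) * (∫⁻ y, rieszKernel (d - α / 2) x y *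
          rieszPotential (d - α * p / 2) μ y ∂σ) ^ (1 - 1 / p) := by
        rw [h_exp]
        exact lintegral_rieszKernel_mul_rpow_le hp (by linarith) (by linarith) hv (by fun_prop) x
    _ ≤ P ^ (1 / p) * (C₁ * P) ^ (1 - 1 / p) := by
        gcongr
        exact h_comp μ x
    _ = C₁ ^ (1 - 1 / p) * P := by
        rw [mul_rpow_of_nonneg _ _ h_conj, mul_left_comm,
          ← rpow_add_of_nonneg _ _ (by positivity) h_conj, add_sub_cancel, rpow_one]
    _ ≤ C₁ ^ (1 - 1 / p) * (C₂ * A ^ (1 / p) * schurWeight σ d α p v x) := by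
        gcongr
        exact h_hedberg hμ x
    _ = ↑(C₁ ^ (1 - 1 / p) * C₂) * A ^ (1 / p) * schurWeight σ d α p v x := by
        rw [coe_mul, coe_rpow_of_nonneg _ h_conj]
        ring

lemma exists_lintegral_sq_lintegral_rieszKernel_le {d α p : ℝ} (hα : 0 < α) (hp : 1 < p)
    (hαp : α * p ≤ d) {σ : Measure X} {B : ℝ≥0} (hσ : HasGrowth σ d B) :
    ∃ C : ℝ≥0, 0 < C ∧ ∀ {v : X → ℝ≥0∞} {A : ℝ≥0}, Measurable v →
      HasGrowth (σ.withDensity fun y ↦ v y ^ p) (d - α * p) (A ^ p) →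
        ∀ {f : X → ℝ≥0∞}, Measurable f →
          ∫⁻ x, (∫⁻ y, rieszKernel (d - α) x y * f y ∂σ) ^ 2 * v x ∂σ ≤
            (C * A) ^ 2 * ∫⁻ x, f x ^ 2 * (v x)⁻¹ ∂σ := by
  have := hσ.isLocallyFiniteMeasure
  have hp₀ : 0 < p := zero_lt_one.trans hp
  have hα_lt : α < α * p := lt_mul_of_one_lt_right hα hp
  have h_conj : 0 < 1 - 1 / p := sub_pos.2 ((div_lt_one hp₀).2 hp)
  obtain ⟨C, hC⟩ := exists_lintegral_rieszKernel_mul_schurWeight_le hα hp hαp hσ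
  refine ⟨C + 1, by positivity, fun {v A} hv hμ {f} hf ↦ ?_⟩
  rcases eq_zero_or_neZero (σ.withDensity fun y ↦ v y ^ p) with h₀ | _
  · have hv_ae : ∀ᵐ x ∂σ, v x = 0 := by
      filter_upwards [(withDensity_eq_zero_iff (by fun_prop)).1 h₀] with x hx
      exact (rpow_eq_zero_iff_of_pos hp₀).1 hx
    refine (lintegral_eq_zero_of_ae_eq_zero ?_).trans_le zero_le
    filter_upwards [hv_ae] with x hx
    simp [hx]
  have hA₀ : A ≠ 0 := fun h ↦ hμ.const_ne_zero (by rw [h, NNReal.zero_rpow hp₀.ne'])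
  have hA_rpow : ((A ^ p : ℝ≥0) : ℝ≥0∞) ^ (1 / p) = A := by
    rw [coe_rpow_of_nonneg _ hp₀.le, ← rpow_mul, mul_one_div_cancel hp₀.ne', rpow_one]
  refine lintegral_sq_lintegral_mul_weight_le_of_schur (φ := schurWeight σ d α p v)
    (by fun_prop) (rieszKernel_comm _) hv (hμ.ae_ne_top_of_withDensity_rpow hv hp₀) (by fun_prop)
    (ae_of_all _ fun x ↦ ?_) ?_ (by simp [hA₀]) (fun x ↦ ?_) hf
  · exact (rpow_pos_of_nonneg (pos_iff_ne_zero.2 <|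
      rieszPotential_ne_zero (by linarith) _ x) h_conj.le).ne'
  · filter_upwards [ae_rieszPotential_ne_top (u := d - α * p / 2) (by linarith) (by linarith)
      (by linarith) hσ hμ] with x hx
    exact rpow_ne_top_of_nonneg h_conj.le hx
  · refine (hC hv hμ x).trans ?_
    rw [hA_rpow]
    gcongr
    simp

theorem riesz_two_weight_general {d α p : ℝ} (hα : 0 < α) (hp : 1 < p) (hαp : α * p ≤ d)
    {σ : Measure X} {B : ℝ≥0} (hσ : HasGrowth σ d B) :
    ∃ C : ℝ≥0, 0 < C ∧ ∀ {v : X → ℝ≥0∞} {A : ℝ≥0}, Measurable v →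
      HasGrowth (σ.withDensity fun y ↦ v y ^ p) (d - α * p) (A ^ p) →
        ∀ {f : X → ℝ≥0∞}, Measurable f →
          (∫⁻ x, (∫⁻ y, rieszKernel (d - α) x y * f y ∂σ) ^ (2 : ℝ) * v x ∂σ) ^ (1 / 2 : ℝ) ≤
            C * A * (∫⁻ x, f x ^ (2 : ℝ) * (v x)⁻¹ ∂σ) ^ (1 / 2 : ℝ) := by
  obtain ⟨C, hC₀, hC⟩ := exists_lintegral_sq_lintegral_rieszKernel_le hα hp hαp hσ
  refine ⟨C, hC₀, fun {v A} hv hμ {f} hf ↦ ?_⟩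
  simp only [rpow_two]
  refine (rpow_le_rpow (hC hv hμ hf) (by norm_num)).trans_eq ?_
  rw [mul_rpow_of_nonneg _ _ (by norm_num), ← rpow_two (C * A : ℝ≥0∞), ← rpow_mul,
    mul_one_div_cancel two_ne_zero, rpow_one]

end Potential

section Euclidean

variable {n : ℕ}

lemma volume_cube (a : Fin n → ℝ) (s : ℝ) :
    volume (cube a s) = ENNReal.ofReal s ^ (n : ℝ) := by
  have h_preimage :
      cube a s = (WithLp.ofLp : Euc n → Fin n → ℝ) ⁻¹' Icc a (fun i ↦ a i + s) := by
    ext x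
    exact forall_and
  rw [h_preimage,
    (PiLp.volume_preserving_ofLp (Fin n)).measure_preimage measurableSet_Icc.nullMeasurableSet,
    Real.volume_Icc_pi]
  simp

lemma closedEBall_subset_cube (x : Euc n) (r : ℝ≥0) :
    closedEBall x r ⊆ cube (fun i ↦ x i - r) (2 * r) := by
  intro y hy i
  rw [mem_closedEBall, edist_le_coe, ← NNReal.coe_le_coe, coe_nndist, dist_eq_norm] at hy
  have h_coord := abs_le.1 ((PiLp.norm_apply_le (y - x) i).trans hy)
  rw [PiLp.sub_apply] at h_coord
  constructor <;> linarith [h_coord.1, h_coord.2]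

lemma hasGrowth_of_forall_cube {ν : Measure (Euc n)} {s : ℝ} {A : ℝ≥0}
    (h : ∀ (a : Fin n → ℝ) (r : ℝ≥0), r ≠ 0 → ν (cube a (2 * r)) ≤ A * r ^ s) :
    HasGrowth ν s A := by
  intro x r hr₀ hr
  lift r to ℝ≥0 using hr
  exact (measure_mono (closedEBall_subset_cube x r)).trans (h _ r (by exact_mod_cast hr₀))

lemma hasGrowth_volume : HasGrowth (volume : Measure (Euc n)) n (2 ^ n) := by
  refine hasGrowth_of_forall_cube fun a r _ ↦ ?_
  rw [volume_cube, ofReal_mul zero_le_two, ofReal_ofNat, ofReal_coe_nnreal,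
    mul_rpow_of_nonneg _ _ n.cast_nonneg, rpow_natCast]
  simp

lemma setLIntegral_cube_rpow_le_morrey {α p : ℝ} (hn : n ≠ 0) (hp : 0 < p) {w : Euc n → ℝ}
    (a : Fin n → ℝ) {s : ℝ} (hs : 0 < s) :
    ∫⁻ y in cube a s, ENNReal.ofReal (w y ^ p) ≤
      morrey n α p w ^ p * ENNReal.ofReal s ^ (n - α * p) := by
  set J := ∫⁻ y in cube a s, ENNReal.ofReal (w y ^ p)
  have hs₀ : ENNReal.ofReal s ≠ 0 := (ofReal_pos.2 hs).ne'
  have h_morrey : volume (cube a s) ^ (α / n) * ((volume (cube a s))⁻¹ * J) ^ (1 / p) ≤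
      morrey n α p w :=
    le_iSup_of_le a (le_iSup₂_of_le s hs le_rfl)
  calc J = (ENNReal.ofReal s ^ (α * p) * (ENNReal.ofReal s ^ (-n : ℝ) * J)) *
        ENNReal.ofReal s ^ (n - α * p) := by
        have h_exp : α * p + -n + (n - α * p) = 0 := by ring
        rw [← mul_assoc, ← rpow_add _ _ hs₀ ofReal_ne_top, mul_right_comm,
          ← rpow_add _ _ hs₀ ofReal_ne_top, h_exp, rpow_zero, one_mul]
    _ = (volume (cube a s) ^ (α / n) * ((volume (cube a s))⁻¹ * J) ^ (1 / p)) ^ p *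
        ENNReal.ofReal s ^ (n - α * p) := by
        rw [volume_cube, mul_rpow_of_nonneg _ _ hp.le, ← rpow_mul, ← rpow_mul, ← rpow_mul,
          one_div_mul_cancel hp.ne', rpow_one, rpow_neg]
        congr 3
        field_simp
    _ ≤ morrey n α p w ^ p * ENNReal.ofReal s ^ (n - α * p) := by gcongr

lemma hasGrowth_withDensity_rpow_of_morrey {α p : ℝ} (hn : n ≠ 0) (hp : 0 < p)
    {w : Euc n → ℝ} (hw : 0 ≤ w) {M : ℝ≥0} (hM : morrey n α p w = M) :
    HasGrowth (volume.withDensity fun y ↦ ENNReal.ofReal (w y) ^ p) (n - α * p)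
      ((2 ^ (n / p - α) * M) ^ p) := by
  refine hasGrowth_of_forall_cube fun a r hr ↦ ?_
  simp only [ofReal_rpow_of_nonneg (hw _) hp.le]
  rw [withDensity_apply']
  refine (setLIntegral_cube_rpow_le_morrey (α := α) hn hp a (by positivity)).trans_eq ?_
  rw [hM, ofReal_mul zero_le_two, ofReal_ofNat, ofReal_coe_nnreal,
    mul_rpow_of_ne_top ofNat_ne_top coe_ne_top, coe_rpow_of_nonneg _ hp.le, coe_mul,
    coe_rpow_of_ne_zero two_ne_zero, coe_ofNat, mul_rpow_of_nonneg _ _ hp.le, ← rpow_mul, sub_mul,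
    div_mul_cancel₀ _ hp.ne']
  ring

lemma rieszE_eq_lintegral_rieszKernel (α : ℝ) (f : Euc n → ℝ≥0∞) (x : Euc n) :
    rieszE α f x = ∫⁻ y, rieszKernel (n - α) x y * f y := by
  simp only [rieszE, rieszKernel, ofReal_norm, ← edist_eq_enorm_sub, ENNReal.inv_rpow,
    ← rpow_neg, neg_sub]

end Euclidean

/-- Two-weight estimate: `‖I_α f‖_{L²(w)} ≤ C ‖w‖_{𝓛^{α,p}} ‖f‖_{L²(w⁻¹)}`. -/
theorem riesz_two_weight (n : ℕ) (hn : 1 ≤ n) (α p : ℝ) (hα0 : 0 < α) (hαn : α < n)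
    (hp1 : 1 < p) (hpn : p ≤ n / α) :
    ∃ C : ℝ≥0∞, 0 < C ∧ C < ⊤ ∧ ∀ w : Euc n → ℝ, 0 ≤ w → Measurable w →
      morrey n α p w ≠ ⊤ → ∀ f : Euc n → ℝ, Measurable f →
      (∫⁻ x, rieszE α (fun y => (‖f y‖₊ : ℝ≥0∞)) x ^ (2 : ℝ) *
          ENNReal.ofReal (w x)) ^ (1 / 2 : ℝ) ≤
        C * morrey n α p w *
          (∫⁻ x, (‖f x‖₊ : ℝ≥0∞) ^ (2 : ℝ) * (ENNReal.ofReal (w x))⁻¹) ^ (1 / 2 : ℝ) := by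
  obtain ⟨C, hC₀, hC⟩ :=
    riesz_two_weight_general hα0 hp1 ((le_div_iff₀' hα0).1 hpn) (hasGrowth_volume (n := n))
  refine ⟨↑(C * 2 ^ (n / p - α)), by exact_mod_cast (by positivity), coe_lt_top,
    fun w hw hw_meas hM f hf ↦ ?_⟩
  lift morrey n α p w to ℝ≥0 using hM with M h_morrey
  have h_growth := hasGrowth_withDensity_rpow_of_morrey
    (Nat.one_le_iff_ne_zero.1 hn) (zero_lt_one.trans hp1) hw h_morrey.symm
  have h_bound := hC hw_meas.ennreal_ofReal h_growth (f := fun y ↦ (‖f y‖₊ : ℝ≥0∞)) (by fun_prop)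
  simpa only [rieszE_eq_lintegral_rieszKernel, coe_mul, mul_assoc] using h_bound
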